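/- Let C1 ⊆ F_{q^m}^n be a linear code and C2 ⊊ C1 a subcode, let 0 ≤ ρ ≤ n, and let N ≥ n − ρ. Then the minimum over all matrices A ∈ F_q^{N×n} with rank A ≥ n − ρ of min{ d_R(X A^T, X' A^T) : X, X' ∈ C1, X' − X ∉ C2 } equals max(0, M_{R,1}(C1,C2) − ρ). -/

import Mathlib

open scoped BigOperators

noncomputable section

variable (q : ℕ) (Fq : Type*) {Fqm : Type*} [Field Fq] [Field Fqm] [Algebra Fq Fqm]

/-- `V = V^q`: the image of `V` under the coordinatewise `q`-th power map equals `V`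
(membership in the family `Γ(F_{q^m}^n)`). -/
def IsGalClosed {n : ℕ} (V : Submodule Fqm (Fin n → Fqm)) : Prop :=
  (fun v : Fin n → Fqm => fun i => v i ^ q) '' (V : Set (Fin n → Fqm)) =
    (V : Set (Fin n → Fqm))

/-- The `i`-th relative dimension/intersection profile (RDIP) of `C1` and `C2`. -/
noncomputable def RDIP {n : ℕ} (C1 C2 : Submodule Fqm (Fin n → Fqm)) (i : ℕ) : ℕ :=
  sSup {d : ℕ | ∃ V : Submodule Fqm (Fin n → Fqm), IsGalClosed q V ∧
    Module.finrank Fqm ↥V = i ∧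
    d = Module.finrank Fqm ↥(C1 ⊓ V) - Module.finrank Fqm ↥(C2 ⊓ V)}

/-- The `i`-th relative generalized rank weight (RGRW) of `C1` and `C2`. -/
noncomputable def RGRW {n : ℕ} (C1 C2 : Submodule Fqm (Fin n → Fqm)) (i : ℕ) : ℕ :=
  sInf {d : ℕ | ∃ V : Submodule Fqm (Fin n → Fqm), IsGalClosed q V ∧
    d = Module.finrank Fqm ↥V ∧
    i ≤ Module.finrank Fqm ↥(C1 ⊓ V) - Module.finrank Fqm ↥(C2 ⊓ V)}

/-- The rank weight `d_R(x,0)` of a vector: the `F_q`-dimension of the `F_q`-span of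
its coordinates. -/
noncomputable def rankWeight {ι : Type*} (x : ι → Fqm) : ℕ :=
  Module.finrank Fq ↥(Submodule.span Fq (Set.range x))

/-- The minimum rank distance of a (nonzero) linear code. -/
noncomputable def minRankDist {ι : Type*} (C : Submodule Fqm (ι → Fqm)) : ℕ :=
  sInf {d : ℕ | ∃ x, x ∈ C ∧ x ≠ 0 ∧ d = rankWeight Fq x}

/-- The dual code with respect to the standard bilinear form `⟨x,y⟩ = ∑ i, x i * y i`. -/
def dualCode {n : ℕ} (V : Submodule Fqm (Fin n → Fqm)) : Submodule Fqm (Fin n → Fqm) where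
  carrier := {x | ∀ v ∈ V, ∑ i, x i * v i = 0}
  add_mem' := by
    intro a b ha hb v hv
    have h1 := ha v hv
    have h2 := hb v hv
    simp only [Set.mem_setOf_eq] at *
    simp only [Pi.add_apply, add_mul]
    rw [Finset.sum_add_distrib, h1, h2, add_zero]
  zero_mem' := by
    intro v hv
    simp
  smul_mem' := by
    intro c x hx v hv
    have h := hx v hv
    simp only [Set.mem_setOf_eq] at *
    simp only [Pi.smul_apply, smul_eq_mul, mul_assoc]
    rw [← Finset.mul_sum, h, mul_zero]


/-- `X Aᵀ ∈ F_{q^m}^N`: the image of a row vector `X ∈ F_{q^m}^n` under the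
`F_{q^m}`-linear map obtained by extending `A ∈ F_q^{N×n}` scalarwise from `F_q`
to `F_{q^m}`. -/
noncomputable def appMat {N n : ℕ} (A : Fin N → Fin n → Fq) (X : Fin n → Fqm) :
    Fin N → Fqm :=
  fun j => ∑ i, X i * algebraMap Fq Fqm (A j i)

/-- The rank over `F_q` of a matrix `A ∈ F_q^{N×n}` (the dimension of its row
space). -/
noncomputable def matRank {N n : ℕ} (A : Fin N → Fin n → Fq) : ℕ :=
  Module.finrank Fq ↥(Submodule.span Fq (Set.range A))

/-!
The rank weight `r` of `x` is the least dimension of a space `V = V^q` containing `x`. A basis of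
the span of the coordinates of `x` writes `x` as a combination of `r` vectors over `F_q`, whose span
is such a `V`. Conversely `V` contains `x, x^q, x^(q^2), …`, and the first `r` of these are
independent: a relation between them is a linearized polynomial of degree less than `q^r` vanishing
on the `q^r` elements of the span of the coordinates. Hence the first relative generalized rank
weight is the least rank weight on `C1 \ C2`.

The coordinates of `x` define an `F_q`-linear map `φ` from `F_q^n` to the extension field, of rank
`r`, and the rank weight of `x Aᵀ` is the dimension of the image under `φ` of the row space of `A`.
Restricting `φ` to a subspace of codimension at most `ρ` lowers its rank by at most `ρ`. If `ρ ≤ r`,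
the preimage of a subspace of codimension `ρ` in the range of `φ` attains this bound. If `r < ρ`,
any subspace of the kernel of `φ` lowers the rank to `0`.
-/

open Module FiniteField

section LinearAlgebra

variable {K V W : Type*} [Field K] [AddCommGroup V] [Module K V] [AddCommGroup W] [Module K W]

theorem finrank_map_add_finrank_ker_inf [FiniteDimensional K V] (f : V →ₗ[K] W)
    (U : Submodule K V) :
    finrank K (U.map f) + finrank K ↥(LinearMap.ker f ⊓ U) = finrank K U := by
  have rank_nullity := (f.domRestrict U).finrank_range_add_finrank_ker
  rwa [LinearMap.range_domRestrict, LinearMap.ker_domRestrict,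
    ← Submodule.finrank_map_subtype_eq U, Submodule.map_comap_subtype, inf_comm] at rank_nullity

theorem finrank_range_add_finrank_le_finrank_map_add_finrank [FiniteDimensional K V]
    (f : V →ₗ[K] W) (U : Submodule K V) :
    finrank K (LinearMap.range f) + finrank K U ≤ finrank K (U.map f) + finrank K V := by
  have h_restrict := finrank_map_add_finrank_ker_inf f U
  have rank_nullity := f.finrank_range_add_finrank_ker
  have h_ker := Submodule.finrank_mono (inf_le_left : LinearMap.ker f ⊓ U ≤ LinearMap.ker f)
  omega

theorem exists_le_finrank_eq (U : Submodule K V) {k : ℕ} (hk : k ≤ finrank K U) :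
    ∃ T ≤ U, finrank K T = k := by
  obtain ⟨v, hv⟩ := exists_linearIndependent_of_le_finrank hk
  refine ⟨(Submodule.span K (Set.range v)).map U.subtype, Submodule.map_subtype_le U _, ?_⟩
  rw [Submodule.finrank_map_subtype_eq, finrank_span_eq_card hv, Fintype.card_fin]

theorem exists_finrank_eq_sub_and_finrank_map_le [FiniteDimensional K V] (f : V →ₗ[K] W) (ρ : ℕ) :
    ∃ U : Submodule K V, finrank K U = finrank K V - ρ ∧
      finrank K (U.map f) ≤ finrank K (LinearMap.range f) - ρ := by
  obtain ⟨T, hT, hT_dim⟩ := exists_le_finrank_eq (LinearMap.range f) (Nat.sub_le _ ρ)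
  have h_comap : finrank K T + finrank K (LinearMap.ker f) = finrank K (T.comap f) := by
    have := finrank_map_add_finrank_ker_inf f (T.comap f)
    rwa [Submodule.map_comap_eq_of_le hT, inf_eq_left.2 (LinearMap.ker_le_comap f)] at this
  have rank_nullity := f.finrank_range_add_finrank_ker
  obtain ⟨U, hU, hU_dim⟩ :=
    exists_le_finrank_eq (k := finrank K V - ρ) (T.comap f) (by omega)
  have : FiniteDimensional K T := Submodule.finiteDimensional_of_le hT
  exact ⟨U, hU_dim, hT_dim ▸ Submodule.finrank_mono (Submodule.map_le_iff_le_comap.2 hU)⟩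

theorem exists_span_range_eq_of_finrank_le (U : Submodule K V) [FiniteDimensional K U] {N : ℕ}
    (hN : finrank K U ≤ N) : ∃ A : Fin N → V, Submodule.span K (Set.range A) = U := by
  obtain ⟨f, hf⟩ : ∃ f : U →ₗ[K] Fin N → K, Function.Injective f :=
    finrank_le_iff_exists_linearMap.1 (by rwa [finrank_fin_fun])
  obtain ⟨g, hg⟩ := f.exists_leftInverse_of_injective (LinearMap.ker_eq_bot.2 hf)
  have h_range : LinearMap.range g = ⊤ :=
    LinearMap.range_eq_top.2 fun u ↦ ⟨f u, LinearMap.congr_fun hg u⟩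
  refine ⟨U.subtype ∘ g ∘ Pi.basisFun K (Fin N), ?_⟩
  rw [Set.range_comp, Set.range_comp, ← Submodule.map_span, ← Submodule.map_span,
    Basis.span_eq, Submodule.map_top, h_range, Submodule.map_subtype_top]

theorem one_le_finrank_inf_sub_finrank_inf_iff [FiniteDimensional K V] {C₁ C₂ : Submodule K V}
    (h : C₂ ≤ C₁) (U : Submodule K V) :
    1 ≤ finrank K ↥(C₁ ⊓ U) - finrank K ↥(C₂ ⊓ U) ↔ ∃ x ∈ (C₁ : Set V) \ C₂, x ∈ U := by
  have h_inf : C₂ ⊓ U ≤ C₁ ⊓ U := inf_le_inf_right U h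
  rw [Nat.one_le_iff_ne_zero, Nat.sub_ne_zero_iff_lt]
  constructor
  · intro hlt
    have h_not_le : ¬ C₁ ⊓ U ≤ C₂ ⊓ U := fun hle ↦ hlt.not_ge (Submodule.finrank_mono hle)
    obtain ⟨x, ⟨hx₁, hxU⟩, hx₂⟩ := SetLike.not_le_iff_exists.1 h_not_le
    exact ⟨x, ⟨hx₁, fun hx ↦ hx₂ ⟨hx, hxU⟩⟩, hxU⟩
  · rintro ⟨x, ⟨hx₁, hx₂⟩, hxU⟩
    exact Submodule.finrank_lt_finrank_of_lt <|
      h_inf.lt_of_not_ge fun hle ↦ hx₂ (hle ⟨hx₁, hxU⟩).1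

end LinearAlgebra

section LinearizedPolynomial

open Polynomial

variable {K : Type*} [Field K] {r : ℕ}

/-- The linearized polynomial (or `q`-polynomial) `∑ k, a k * X ^ (q ^ k)`. When `q` is the order
of a finite subfield, its evaluation map is linear over that subfield. -/
def linearizedPoly (q : ℕ) (a : Fin r → K) : K[X] :=
  ∑ k, C (a k) * X ^ q ^ (k : ℕ)

theorem eval_linearizedPoly (q : ℕ) (a : Fin r → K) (y : K) :
    (linearizedPoly q a).eval y = ∑ k, a k * y ^ q ^ (k : ℕ) := by
  simp [linearizedPoly, eval_finsetSum]

theorem coeff_linearizedPoly {q : ℕ} (hq : 1 < q) (a : Fin r → K) (k : Fin r) :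
    (linearizedPoly q a).coeff (q ^ (k : ℕ)) = a k := by
  simp [linearizedPoly, coeff_C_mul, coeff_X_pow, Nat.pow_right_inj hq,
    Fin.val_inj]

theorem natDegree_linearizedPoly_lt {q : ℕ} (hq : 1 < q) (a : Fin r → K) :
    (linearizedPoly q a).natDegree < q ^ r := by
  have h_term (k : Fin r) : (C (a k) * X ^ q ^ (k : ℕ)).natDegree ≤ q ^ r - 1 :=
    (natDegree_C_mul_X_pow_le _ _).trans (Nat.le_sub_one_of_lt (Nat.pow_lt_pow_right hq k.2))
  exact Nat.lt_of_le_sub_one (Nat.pow_pos (by omega))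
    (natDegree_sum_le_of_forall_le _ _ fun k _ ↦ h_term k)

theorem eval_linearizedPoly_eq_zero_of_mem_span {F : Type*} [Field F] [Fintype F] [Algebra F K]
    {a : Fin r → K} {s : Set K} (hs : ∀ y ∈ s, (linearizedPoly (Fintype.card F) a).eval y = 0)
    {y : K} (hy : y ∈ Submodule.span F s) : (linearizedPoly (Fintype.card F) a).eval y = 0 := by
  let L : K →ₗ[F] K := ∑ k, a k • ((frobeniusAlgHom F K) ^ (k : ℕ)).toLinearMap
  have hL (z : K) : L z = (linearizedPoly (Fintype.card F) a).eval z := by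
    simp [L, eval_linearizedPoly, coe_frobeniusAlgHom, pow_iterate, AlgHom.coe_pow]
  rw [← hL, ← LinearMap.mem_ker]
  exact Submodule.span_le.2 (fun z hz ↦ LinearMap.mem_ker.2 ((hL z).trans (hs z hz))) hy

end LinearizedPolynomial

section GaloisClosed

/-- The coordinatewise Frobenius `v ↦ v^q` with `q = |F_q|`, as a semilinear map, so that `V^q` is
the image `V.map (vecFrobenius Fq n)`. -/
def vecFrobenius (n : ℕ) [Fintype Fq] :
    (Fin n → Fqm) →ₛₗ[(frobeniusAlgHom Fq Fqm : Fqm →+* Fqm)] (Fin n → Fqm) where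
  toFun v i := v i ^ Fintype.card Fq
  map_add' v w := funext fun i ↦ map_add (frobeniusAlgHom Fq Fqm) (v i) (w i)
  map_smul' a v := funext fun i ↦ mul_pow a (v i) _

variable {n : ℕ}

variable {q} in
theorem IsGalClosed.pow_pow_mem {V : Submodule Fqm (Fin n → Fqm)} (hV : IsGalClosed q V) (k : ℕ)
    {x : Fin n → Fqm} (hx : x ∈ V) : (fun i ↦ x i ^ q ^ k) ∈ V := by
  induction k with
  | zero => simpa using hx
  | succ k ih =>
    have h_pow : (fun i ↦ (x i ^ q ^ k) ^ q) ∈ (V : Set (Fin n → Fqm)) := hV ▸ ⟨_, ih, rfl⟩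
    simpa only [pow_succ, pow_mul, SetLike.mem_coe] using h_pow

variable [Fintype Fq]

instance ringHomSurjective_frobeniusAlgHom [PerfectField Fqm] :
    RingHomSurjective (frobeniusAlgHom Fq Fqm : Fqm →+* Fqm) := by
  obtain ⟨p, _⟩ := ExpChar.exists Fqm
  exact ⟨(frobeniusAlgEquiv Fq Fqm p).surjective⟩

theorem isGalClosed_span_range_algebraMap_comp [PerfectField Fqm] {ι : Type*}
    (c : ι → Fin n → Fq) :
    IsGalClosed (Fintype.card Fq)
      (Submodule.span Fqm (Set.range fun k ↦ algebraMap Fq Fqm ∘ c k)) := by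
  have h_fixed (k : ι) :
      vecFrobenius Fq n (algebraMap Fq Fqm ∘ c k) = algebraMap Fq Fqm ∘ c k :=
    funext fun i ↦ (frobeniusAlgHom Fq Fqm).commutes (c k i)
  have h_map : (Submodule.span Fqm (Set.range fun k ↦ algebraMap Fq Fqm ∘ c k)).map
      (vecFrobenius Fq n) = Submodule.span Fqm (Set.range fun k ↦ algebraMap Fq Fqm ∘ c k) := by
    rw [Submodule.map_span, ← Set.range_comp]
    simp only [Function.comp_def (vecFrobenius Fq n), h_fixed]
  exact congrArg SetLike.coe h_map

end GaloisClosed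

section RankWeight

theorem exists_eq_sum_smul_algebraMap_comp {ι : Type*} [Finite ι] (x : ι → Fqm) :
    ∃ (b : Fin (rankWeight Fq x) → Fqm) (c : Fin (rankWeight Fq x) → ι → Fq),
      x = ∑ k, b k • (algebraMap Fq Fqm ∘ c k) := by
  let E := Submodule.span Fq (Set.range x)
  have : FiniteDimensional Fq E := FiniteDimensional.span_of_finite Fq (Set.finite_range x)
  let b : Basis (Fin (rankWeight Fq x)) Fq E := finBasis Fq E
  let e (i : ι) : E := ⟨x i, Submodule.subset_span ⟨i, rfl⟩⟩
  refine ⟨fun k ↦ b k, fun k i ↦ b.repr (e i) k, funext fun i ↦ ?_⟩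
  calc x i = E.subtype (∑ k, b.repr (e i) k • b k) := by rw [b.sum_repr]; rfl
    _ = ∑ k, b.repr (e i) k • (b k : Fqm) := by
      simp only [map_sum, map_smul, Submodule.subtype_apply]
    _ = _ := by simp [Algebra.smul_def, mul_comm]

theorem linearIndependent_pow_card_pow [Fintype Fq] {ι : Type*} [Finite ι] (x : ι → Fqm) :
    LinearIndependent Fqm
      fun (k : Fin (rankWeight Fq x)) (i : ι) ↦ x i ^ Fintype.card Fq ^ (k : ℕ) := by
  rw [Fintype.linearIndependent_iff]
  intro a ha k
  let E := Submodule.span Fq (Set.range x)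
  have : FiniteDimensional Fq E := FiniteDimensional.span_of_finite Fq (Set.finite_range x)
  have : Fintype E := @Fintype.ofFinite E (Module.finite_of_finite Fq)
  have h_range : ∀ y ∈ Set.range x, (linearizedPoly (Fintype.card Fq) a).eval y = 0 := by
    rintro _ ⟨i, rfl⟩
    simpa [eval_linearizedPoly] using congrFun ha i
  have h_zero : linearizedPoly (Fintype.card Fq) a = 0 :=
    Polynomial.eq_zero_of_natDegree_lt_card_of_eval_eq_zero _
      (Subtype.val_injective (p := fun y ↦ y ∈ E))
      (fun y ↦ eval_linearizedPoly_eq_zero_of_mem_span h_range y.2)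
      ((natDegree_linearizedPoly_lt Fintype.one_lt_card a).trans_eq
        (card_eq_pow_finrank (K := Fq) (V := E)).symm)
  rw [← coeff_linearizedPoly (Fintype.one_lt_card (α := Fq)) a k, h_zero, Polynomial.coeff_zero]

variable [Fintype Fq] {n : ℕ}

theorem IsGalClosed.rankWeight_le_finrank {V : Submodule Fqm (Fin n → Fqm)}
    (hV : IsGalClosed (Fintype.card Fq) V) {x : Fin n → Fqm} (hx : x ∈ V) :
    rankWeight Fq x ≤ finrank Fqm V := by
  have h_indep : LinearIndependent Fqm fun k : Fin (rankWeight Fq x) ↦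
      (⟨_, hV.pow_pow_mem k hx⟩ : V) :=
    .of_comp V.subtype (linearIndependent_pow_card_pow Fq x)
  simpa only [Fintype.card_fin] using h_indep.fintype_card_le_finrank

theorem isLeast_finrank_isGalClosed [PerfectField Fqm] (x : Fin n → Fqm) :
    IsLeast {d | ∃ V : Submodule Fqm (Fin n → Fqm),
      IsGalClosed (Fintype.card Fq) V ∧ x ∈ V ∧ d = finrank Fqm V} (rankWeight Fq x) := by
  constructor
  · obtain ⟨b, c, hx⟩ := exists_eq_sum_smul_algebraMap_comp Fq x
    let V := Submodule.span Fqm (Set.range fun k ↦ algebraMap Fq Fqm ∘ c k)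
    have hV : IsGalClosed (Fintype.card Fq) V := isGalClosed_span_range_algebraMap_comp Fq c
    have hxV : x ∈ V := Submodule.mem_span_range_iff_exists_fun Fqm |>.2 ⟨b, hx.symm⟩
    have h_dim : finrank Fqm V ≤ rankWeight Fq x :=
      (finrank_range_le_card _).trans_eq (Fintype.card_fin _)
    exact ⟨V, hV, hxV, (hV.rankWeight_le_finrank Fq hxV).antisymm h_dim⟩
  · rintro _ ⟨V, hV, hxV, rfl⟩
    exact hV.rankWeight_le_finrank Fq hxV

theorem isLeast_RGRW_one [PerfectField Fqm] {C₁ C₂ : Submodule Fqm (Fin n → Fqm)}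
    (h : C₂ < C₁) :
    IsLeast (rankWeight Fq '' ((C₁ : Set (Fin n → Fqm)) \ C₂))
      (RGRW (Fintype.card Fq) C₁ C₂ 1) := by
  let S := {d : ℕ | ∃ V : Submodule Fqm (Fin n → Fqm), IsGalClosed (Fintype.card Fq) V ∧
    d = finrank Fqm V ∧ 1 ≤ finrank Fqm ↥(C₁ ⊓ V) - finrank Fqm ↥(C₂ ⊓ V)}
  have h_mem {x : Fin n → Fqm} (hx : x ∈ (C₁ : Set (Fin n → Fqm)) \ C₂) : rankWeight Fq x ∈ S := by
    obtain ⟨V, hV, hxV, h_dim⟩ := (isLeast_finrank_isGalClosed Fq x).1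
    exact ⟨V, hV, h_dim, (one_le_finrank_inf_sub_finrank_inf_iff h.le V).2 ⟨x, hx, hxV⟩⟩
  obtain ⟨x₀, hx₀⟩ := SetLike.exists_of_lt h
  obtain ⟨V, hV, h_dim, h_diff⟩ : RGRW (Fintype.card Fq) C₁ C₂ 1 ∈ S := Nat.sInf_mem ⟨_, h_mem hx₀⟩
  obtain ⟨x, hx, hxV⟩ := (one_le_finrank_inf_sub_finrank_inf_iff h.le V).1 h_diff
  refine ⟨⟨x, hx, le_antisymm ?_ (Nat.sInf_le (h_mem hx))⟩, ?_⟩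
  · exact (hV.rankWeight_le_finrank Fq hxV).trans_eq h_dim.symm
  · rintro _ ⟨y, hy, rfl⟩
    exact Nat.sInf_le (h_mem hy)

end RankWeight

section MatrixImage

variable {Fq} {N n : ℕ}

theorem appMat_sub (A : Fin N → Fin n → Fq) (x y : Fin n → Fqm) :
    appMat Fq A (x - y) = appMat Fq A x - appMat Fq A y := by
  ext
  simp [appMat, sub_mul]

theorem appMat_eq_linearCombination_comp (A : Fin N → Fin n → Fq) (x : Fin n → Fqm) :
    appMat Fq A x = Fintype.linearCombination Fq x ∘ A := by
  ext
  simp [appMat, Fintype.linearCombination_apply, Algebra.smul_def, mul_comm]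

theorem rankWeight_eq_finrank_range (x : Fin n → Fqm) :
    rankWeight Fq x = finrank Fq (LinearMap.range (Fintype.linearCombination Fq x)) := by
  rw [rankWeight, Fintype.range_linearCombination]

theorem rankWeight_appMat (A : Fin N → Fin n → Fq) (x : Fin n → Fqm) :
    rankWeight Fq (appMat Fq A x) = finrank Fq
      ((Submodule.span Fq (Set.range A)).map (Fintype.linearCombination Fq x)) := by
  rw [rankWeight, appMat_eq_linearCombination_comp, Set.range_comp, Submodule.map_span]

theorem rankWeight_add_matRank_le (A : Fin N → Fin n → Fq) (x : Fin n → Fqm) :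
    rankWeight Fq x + matRank Fq A ≤ rankWeight Fq (appMat Fq A x) + n := by
  have := finrank_range_add_finrank_le_finrank_map_add_finrank
    (Fintype.linearCombination Fq x) (Submodule.span Fq (Set.range A))
  rwa [finrank_fin_fun, ← rankWeight_eq_finrank_range, ← rankWeight_appMat] at this

theorem exists_matRank_eq_and_rankWeight_appMat_le {ρ : ℕ} (hN : n - ρ ≤ N) (x : Fin n → Fqm) :
    ∃ A : Fin N → Fin n → Fq,
      matRank Fq A = n - ρ ∧ rankWeight Fq (appMat Fq A x) ≤ rankWeight Fq x - ρ := by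
  obtain ⟨U, hU_dim, hU_map⟩ :=
    exists_finrank_eq_sub_and_finrank_map_le (Fintype.linearCombination Fq x) ρ
  rw [finrank_fin_fun] at hU_dim
  obtain ⟨A, rfl⟩ := exists_span_range_eq_of_finrank_le U (hU_dim.trans_le hN)
  exact ⟨A, hU_dim, by rwa [rankWeight_appMat, rankWeight_eq_finrank_range]⟩

theorem isLeast_sInf_rankWeight_appMat {ρ w : ℕ} (hN : n - ρ ≤ N) {D : Set (Fin n → Fqm)}
    (hw : IsLeast (rankWeight Fq '' D) w) :
    IsLeast {d | ∃ A : Fin N → Fin n → Fq, n - ρ ≤ matRank Fq A ∧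
      d = sInf ((fun x ↦ rankWeight Fq (appMat Fq A x)) '' D)} (w - ρ) := by
  obtain ⟨⟨x, hx, rfl⟩, h_min⟩ := hw
  have h_lower {A : Fin N → Fin n → Fq} (hA : n - ρ ≤ matRank Fq A) :
      rankWeight Fq x - ρ ≤ sInf ((fun y ↦ rankWeight Fq (appMat Fq A y)) '' D) := by
    refine le_csInf ⟨_, x, hx, rfl⟩ ?_
    rintro _ ⟨y, hy, rfl⟩
    have hxy : rankWeight Fq x ≤ rankWeight Fq y := h_min ⟨y, hy, rfl⟩
    have hy_A := rankWeight_add_matRank_le A y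
    dsimp only
    omega
  constructor
  · obtain ⟨A, hA, hAx⟩ := exists_matRank_eq_and_rankWeight_appMat_le (Fq := Fq) hN x
    have h_upper : sInf ((fun y ↦ rankWeight Fq (appMat Fq A y)) '' D) ≤ rankWeight Fq x - ρ :=
      (Nat.sInf_le (Set.mem_image_of_mem _ hx)).trans hAx
    exact ⟨A, hA.ge, (h_lower hA.ge).antisymm h_upper⟩
  · rintro _ ⟨A, hA, rfl⟩
    exact h_lower hA

theorem setOf_rankWeight_appMat_sub_eq_image (A : Fin N → Fin n → Fq)
    (C₁ C₂ : Submodule Fqm (Fin n → Fqm)) :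
    {e | ∃ x ∈ C₁, ∃ x' ∈ C₁, x' - x ∉ C₂ ∧
      e = rankWeight Fq (appMat Fq A x' - appMat Fq A x)} =
      (fun x ↦ rankWeight Fq (appMat Fq A x)) '' ((C₁ : Set (Fin n → Fqm)) \ C₂) := by
  ext e
  constructor
  · rintro ⟨x, hx, x', hx', h_sub, rfl⟩
    exact ⟨x' - x, ⟨C₁.sub_mem hx' hx, h_sub⟩, by simp only [appMat_sub]⟩
  · rintro ⟨x, ⟨hx₁, hx₂⟩, rfl⟩
    exact ⟨0, C₁.zero_mem, x, hx₁, by rwa [sub_zero], by rw [← appMat_sub, sub_zero]⟩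

end MatrixImage

theorem stmt17_general (n N ρ : ℕ) [Fintype Fq] [PerfectField Fqm]
    (hq : Fintype.card Fq = q)
    (C1 C2 : Submodule Fqm (Fin n → Fqm)) (h12 : C2 < C1) (hN : n - ρ ≤ N) :
    sInf {d : ℕ | ∃ A : Fin N → Fin n → Fq,
        n - ρ ≤ matRank Fq A ∧
        d = sInf {e : ℕ | ∃ x ∈ C1, ∃ x' ∈ C1, x' - x ∉ C2 ∧
              e = rankWeight Fq (appMat Fq A x' - appMat Fq A x)}} =
      RGRW q C1 C2 1 - ρ := by
  subst hq
  simp only [setOf_rankWeight_appMat_sub_eq_image]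
  exact (isLeast_sInf_rankWeight_appMat hN (isLeast_RGRW_one Fq h12)).csInf_eq

/-- For a linear code `C1 ⊆ F_{q^m}^n`, a subcode `C2 ⊊ C1`,
`0 ≤ ρ ≤ n` and `N ≥ n - ρ`, the minimum over all `A ∈ F_q^{N×n}` with
`rank A ≥ n - ρ` of `min{ d_R(X Aᵀ, X' Aᵀ) : X, X' ∈ C1, X' - X ∉ C2 }` equals
`max(0, M_{R,1}(C1,C2) - ρ)` (natural subtraction). -/
theorem stmt17 (m n N ρ : ℕ) [Fintype Fq] [Fintype Fqm]
    (hq : Fintype.card Fq = q) (hm : Module.finrank Fq Fqm = m)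
    (C1 C2 : Submodule Fqm (Fin n → Fqm)) (h12 : C2 < C1)
    (hρ : ρ ≤ n) (hN : n - ρ ≤ N) :
    sInf {d : ℕ | ∃ A : Fin N → Fin n → Fq,
        n - ρ ≤ matRank Fq A ∧
        d = sInf {e : ℕ | ∃ x ∈ C1, ∃ x' ∈ C1, x' - x ∉ C2 ∧
              e = rankWeight Fq (appMat Fq A x' - appMat Fq A x)}} =
      RGRW q C1 C2 1 - ρ := by
  exact stmt17_general q Fq n N ρ hq C1 C2 h12 hN

end
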